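/- arXiv:1902.06020 — 2 statements merged into one kernel-verified Lean document; each statement's English description precedes it below -/
import Mathlib

section
/- There exists a constant C > 0 such that for every positive integer k, if V_k is a random variable with the Beta(k, 3k) distribution, then E|log(4V_k)| ≤ C·k^{-1/2}; that is, ∫₀¹ |log(4x)| · x^{k-1}(1-x)^{3k-1}/B(k,3k) dx ≤ C·k^{-1/2}. In particular E|log(4V_k)| = O(k^{-1/2}) as k → ∞. -/
lemma aux_log (y s : ℝ) (hy : 0 < y) (hs : 0 < s) :
    |Real.log y| ≤ (s * (y - 2 + 1 / y) + 1 / s) / 2 := by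
  have h1 : (Real.log y) ^ 2 ≤ y - 2 + 1 / y := by
    set t := Real.log y / 2 with ht
    have hL : Real.log y = 2 * t := by rw [ht]; ring
    have h2 : |t| ≤ Real.sinh |t| := Real.self_le_sinh_iff.2 (abs_nonneg t)
    rw [← Real.abs_sinh] at h2
    have h3 := sq_le_sq.2 h2
    have e1 : Real.exp t * Real.exp t = y := by
      rw [← Real.exp_add, ← two_mul, ← hL, Real.exp_log hy]
    have hp := Real.exp_pos t
    have h4 : y - 2 + 1 / y = 4 * (Real.sinh t) ^ 2 := by
      rw [Real.sinh_eq, Real.exp_neg, ← e1]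
      field_simp
      ring
    rw [h4, hL]
    nlinarith
  have h2 : |Real.log y| ≤ (s * (Real.log y) ^ 2 + 1 / s) / 2 := by
    rw [← sq_abs]
    have : (s * |Real.log y| ^ 2 + 1 / s) / 2 - |Real.log y|
        = (s * |Real.log y| - 1) ^ 2 / (2 * s) := by
      field_simp
      ring
    have h : 0 ≤ (s * |Real.log y| - 1) ^ 2 / (2 * s) := by positivity
    linarith
  have := mul_le_mul_of_nonneg_left h1 hs.le
  linarith

lemma aux_rec (a b : ℕ) :
    ((a : ℝ) + b + 2) * (∫ t in (0:ℝ)..1, t ^ (a + 1) * (1 - t) ^ b) =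
      ((a : ℝ) + 1) * ∫ t in (0:ℝ)..1, t ^ a * (1 - t) ^ b := by
  have h : (∫ t in (0:ℝ)..1, (((a : ℝ) + 1) * (t ^ a * (1 - t) ^ b)
      - ((a : ℝ) + b + 2) * (t ^ (a + 1) * (1 - t) ^ b))) =
      (1:ℝ) ^ (a + 1) * (1 - 1) ^ (b + 1) - 0 ^ (a + 1) * (1 - 0) ^ (b + 1) := by
    refine intervalIntegral.integral_eq_sub_of_hasDerivAt
      (f := fun t : ℝ => t ^ (a + 1) * (1 - t) ^ (b + 1)) (fun x _ => ?_)
      (Continuous.intervalIntegrable (by fun_prop) _ _)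
    have h1 := (hasDerivAt_pow (a + 1) x).mul
      (((hasDerivAt_id x).const_sub 1).pow (b + 1))
    convert! h1 using 1
    simp
    ring
  rw [intervalIntegral.integral_sub (Continuous.intervalIntegrable (by fun_prop) _ _)
    (Continuous.intervalIntegrable (by fun_prop) _ _), intervalIntegral.integral_const_mul,
    intervalIntegral.integral_const_mul] at h
  simp at h
  linarith

lemma aux_main (m : ℕ) (s : ℝ) (hs : 0 < s) (hs2 : s ^ 2 = m + 2) :
    (∫ x in (0:ℝ)..1, |Real.log (4 * x)| * (x ^ (m + 1) * (1 - x) ^ (3 * m + 5)) /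
          (∫ t in (0:ℝ)..1, t ^ (m + 1) * (1 - t) ^ (3 * m + 5))) ≤ 2 * (1 / s) := by
  have r1 := aux_rec (m + 1) (3 * m + 5)
  have r0 := aux_rec m (3 * m + 5)
  have hJ : 0 < ∫ t in (0:ℝ)..1, t ^ (m + 1) * (1 - t) ^ (3 * m + 5) := by
    refine intervalIntegral.intervalIntegral_pos_of_pos_on
      (Continuous.intervalIntegrable (by fun_prop) _ _) (fun x hx => ?_) one_pos
    have := hx.1
    have : 0 < 1 - x := by linarith [hx.2]
    positivity
  set J := ∫ t in (0:ℝ)..1, t ^ (m + 1) * (1 - t) ^ (3 * m + 5) with hJd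
  set J2 := ∫ t in (0:ℝ)..1, t ^ (m + 1 + 1) * (1 - t) ^ (3 * m + 5) with hJ2
  set J0 := ∫ t in (0:ℝ)..1, t ^ m * (1 - t) ^ (3 * m + 5) with hJ0
  push_cast at r1 r0
  have hm : (0:ℝ) ≤ m := Nat.cast_nonneg m
  have e2 : J2 = J / 4 := by
    have : ((m:ℝ) + 2) * (J2 - J / 4) = 0 := by linarith
    rcases mul_eq_zero.1 this with h | h <;> linarith
  have e0 : J0 = (4 * m + 7) / (m + 1) * J := by
    field_simp
    linarith
  let g : ℝ → ℝ := fun x => 2 * s / J * (x ^ (m + 1 + 1) * (1 - x) ^ (3 * m + 5))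
    + (1 / (2 * s) - s) / J * (x ^ (m + 1) * (1 - x) ^ (3 * m + 5))
    + s / (8 * J) * (x ^ m * (1 - x) ^ (3 * m + 5))
  have hgc : Continuous g := by fun_prop
  have hle : (∫ x in (0:ℝ)..1, |Real.log (4 * x)| * (x ^ (m + 1) * (1 - x) ^ (3 * m + 5)) / J)
      ≤ ∫ x in (0:ℝ)..1, g x := by
    rw [intervalIntegral.integral_of_le zero_le_one, intervalIntegral.integral_of_le zero_le_one]
    refine MeasureTheory.integral_mono_of_nonneg ?_ ?_ ?_
    · refine MeasureTheory.ae_restrict_of_forall_mem measurableSet_Ioc (fun x hx => ?_)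
      have := hx.1
      have : 0 ≤ 1 - x := by linarith [hx.2]
      simp only [Pi.zero_apply]
      positivity
    · exact (intervalIntegrable_iff_integrableOn_Ioc_of_le zero_le_one).1
        (hgc.intervalIntegrable 0 1)
    · refine MeasureTheory.ae_restrict_of_forall_mem measurableSet_Ioc (fun x hx => ?_)
      have hx0 := hx.1
      have h1x : 0 ≤ 1 - x := by linarith [hx.2]
      have hl := aux_log (4 * x) s (by positivity) hs
      have hw : 0 ≤ (x ^ (m + 1) * (1 - x) ^ (3 * m + 5)) / J := by positivity
      have h := mul_le_mul_of_nonneg_right hl hw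
      simp only [g]
      rw [mul_div_assoc]
      refine h.trans (le_of_eq ?_)
      generalize (1 - x) ^ (3 * m + 5) = w
      rw [pow_succ x (m + 1), pow_succ x m]
      field_simp
      ring
  refine hle.trans ?_
  have hi : (∫ x in (0:ℝ)..1, g x) = 2 * s / J * J2 + (1 / (2 * s) - s) / J * J
      + s / (8 * J) * J0 := by
    simp only [g]
    rw [intervalIntegral.integral_add (Continuous.intervalIntegrable (by fun_prop) _ _)
      (Continuous.intervalIntegrable (by fun_prop) _ _),
      intervalIntegral.integral_add (Continuous.intervalIntegrable (by fun_prop) _ _)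
      (Continuous.intervalIntegrable (by fun_prop) _ _)]
    simp only [intervalIntegral.integral_const_mul]
    rfl
  rw [hi, e2, e0]
  have : 2 * s / J * (J / 4) + (1 / (2 * s) - s) / J * J
      + s / (8 * J) * ((4 * m + 7) / (m + 1) * J) =
      1 / s * (1 / 2 + 3 / 8 * (s ^ 2 / (m + 1))) := by
    field_simp
    ring
  rw [this, mul_comm 2]
  have h2 : s ^ 2 / (m + 1) ≤ 2 := by
    rw [hs2, div_le_iff₀ (by positivity)]
    linarith
  exact mul_le_mul_of_nonneg_left (by linarith) (by positivity)

/-- There is a constant `C > 0` such that for every `k ≥ 1`, if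
`V_k ~ Beta(k, 3k)` then `E|log(4 V_k)| ≤ C k^{-1/2}`, i.e.
`∫₀¹ |log(4x)| · x^{k-1}(1-x)^{3k-1} / B(k,3k) dx ≤ C · k^{-1/2}`,
where `B(k,3k) = ∫₀¹ x^{k-1}(1-x)^{3k-1} dx`. In particular
`E|log(4 V_k)| = O(k^{-1/2})` as `k → ∞`. -/
theorem beta_k_3k_log_moment_bound :
    ∃ C : ℝ, 0 < C ∧ ∀ k : ℕ, 0 < k →
      (∫ x in (0:ℝ)..1, |Real.log (4 * x)| * (x ^ (k - 1) * (1 - x) ^ (3 * k - 1)) /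
          (∫ t in (0:ℝ)..1, t ^ (k - 1) * (1 - t) ^ (3 * k - 1))) ≤
        C * (k : ℝ) ^ (-(1 / 2 : ℝ)) := by
  refine ⟨2 + |∫ x in (0:ℝ)..1, |Real.log (4 * x)| * (x ^ (1 - 1) * (1 - x) ^ (3 * 1 - 1)) /
          (∫ t in (0:ℝ)..1, t ^ (1 - 1) * (1 - t) ^ (3 * 1 - 1))|, by positivity, ?_⟩
  intro k hk
  match k, hk with
  | 1, _ =>
    rw [Nat.cast_one, Real.one_rpow, mul_one]
    exact (le_abs_self _).trans (by linarith)
  | m + 2, _ =>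
    have hm : (0:ℝ) < (m:ℝ) + 2 := by positivity
    have h := aux_main m (Real.sqrt (m + 2)) (Real.sqrt_pos.2 hm) (Real.sq_sqrt hm.le)
    have e : ((m + 2 : ℕ) : ℝ) ^ (-(1 / 2 : ℝ)) = 1 / Real.sqrt (m + 2) := by
      push_cast
      rw [Real.rpow_neg hm.le, ← Real.sqrt_eq_rpow, one_div]
    rw [e]
    have e1 : m + 2 - 1 = m + 1 := by omega
    have e2 : 3 * (m + 2) - 1 = 3 * m + 5 := by omega
    rw [e1, e2]
    refine h.trans (mul_le_mul_of_nonneg_right ?_ (by positivity))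
    exact le_add_of_nonneg_right (abs_nonneg _)
end

section
/- There exists a constant C > 0 such that for every positive integer k, if U_k is a random variable with the Beta(k, k) distribution, then E|log(2U_k)| ≤ C·k^{-1/2}; that is, ∫₀¹ |log(2x)| · x^{k-1}(1-x)^{k-1}/B(k,k) dx ≤ C·k^{-1/2}. In particular η(k) := E|log(2U_k)| = O(k^{-1/2}) as k → ∞. -/
lemma aux_log_s4 {x : ℝ} (h0 : 0 < x) (h1 : x ≤ 1) : |Real.log (2 * x)| * x ≤ |2 * x - 1| := by
  have hl := Real.log_le_sub_one_of_pos (show 0 < 2 * x by linarith)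
  have hu := Real.one_sub_inv_le_log_of_pos (show 0 < 2 * x by linarith)
  rcases le_total 1 (2 * x) with h | h
  · rw [abs_of_nonneg (Real.log_nonneg h), abs_of_nonneg (by linarith)]
    nlinarith [Real.log_nonneg h]
  · rw [abs_of_nonpos (Real.log_nonpos (by linarith) h), abs_of_nonpos (by linarith)]
    have : (2 * x)⁻¹ * x = 1 / 2 := by field_simp
    nlinarith

lemma aux_deriv (m : ℕ) (x : ℝ) :
    HasDerivAt (fun x : ℝ => (x * (1 - x)) ^ (m + 1) / (m + 1))
      ((1 - 2 * x) * (x * (1 - x)) ^ m) x := by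
  have h : HasDerivAt (fun x : ℝ => x * (1 - x)) (1 - 2 * x) x :=
    ((hasDerivAt_id' x).mul ((hasDerivAt_id' x).const_sub 1)).congr_deriv (by ring)
  refine ((h.pow (m + 1)).div_const ((m : ℝ) + 1)).congr_deriv ?_
  have : (m : ℝ) + 1 ≠ 0 := by positivity
  rw [div_eq_iff this, Nat.add_sub_cancel]
  push_cast
  ring

lemma aux_int (m : ℕ) :
    ∫ x in (0:ℝ)..1, |2 * x - 1| * (x * (1 - x)) ^ m = 2 * (1 / 4) ^ (m + 1) / (m + 1) := by
  have hc : Continuous fun x : ℝ => |2 * x - 1| * (x * (1 - x)) ^ m := by fun_prop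
  have hd : Continuous fun x : ℝ => (1 - 2 * x) * (x * (1 - x)) ^ m := by fun_prop
  rw [← intervalIntegral.integral_add_adjacent_intervals (b := 1 / 2)
    (hc.intervalIntegrable _ _) (hc.intervalIntegrable _ _)]
  have e1 : ∫ x in (0:ℝ)..(1/2), |2 * x - 1| * (x * (1 - x)) ^ m
      = ∫ x in (0:ℝ)..(1/2), (1 - 2 * x) * (x * (1 - x)) ^ m := by
    apply intervalIntegral.integral_congr
    intro x hx
    rw [Set.uIcc_of_le (by norm_num)] at hx
    simp only
    rw [abs_of_nonpos (by linarith [hx.2])]; ring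
  have e2 : ∫ x in (1/2:ℝ)..1, |2 * x - 1| * (x * (1 - x)) ^ m
      = ∫ x in (1/2:ℝ)..1, -((1 - 2 * x) * (x * (1 - x)) ^ m) := by
    apply intervalIntegral.integral_congr
    intro x hx
    rw [Set.uIcc_of_le (by norm_num)] at hx
    simp only
    rw [abs_of_nonneg (by linarith [hx.1])]; ring
  rw [e1, e2, intervalIntegral.integral_neg,
    intervalIntegral.integral_eq_sub_of_hasDerivAt (fun x _ => aux_deriv m x)
      (hd.intervalIntegrable _ _),
    intervalIntegral.integral_eq_sub_of_hasDerivAt (fun x _ => aux_deriv m x)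
      (hd.intervalIntegrable _ _)]
  norm_num
  ring

lemma aux_lower (n : ℕ) :
    (1 / 4 : ℝ) ^ n / (8 * √((n : ℝ) + 1)) ≤ ∫ t in (0:ℝ)..1, t ^ n * (1 - t) ^ n := by
  set r := √((n : ℝ) + 1) with hr
  have hr2 : r ^ 2 = n + 1 := Real.sq_sqrt (by positivity)
  have hr1 : 1 ≤ r := by rw [hr]; apply Real.one_le_sqrt.2; simp
  have hd : 1 / (4 * r) ≤ 1 / 4 := by
    apply one_div_le_one_div_of_le <;> linarith
  have hd0 : 0 < 1 / (4 * r) := by positivity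
  have hc : Continuous fun t : ℝ => t ^ n * (1 - t) ^ n := by fun_prop
  calc (1 / 4 : ℝ) ^ n / (8 * r)
      = ∫ t in (1/2:ℝ)..(1/2 + 1/(4*r)), (1 / 4 : ℝ) ^ n * (1 / 2) := by
        rw [intervalIntegral.integral_const, smul_eq_mul]; field_simp; ring
    _ ≤ ∫ t in (1/2:ℝ)..(1/2 + 1/(4*r)), t ^ n * (1 - t) ^ n := by
        apply intervalIntegral.integral_mono_on (by linarith) (by simp)
          (hc.intervalIntegrable _ _)
        intro t ht
        have e : t ^ n * (1 - t) ^ n = (1 / 4) ^ n * (1 + -(2 * t - 1) ^ 2) ^ n := by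
          rw [← mul_pow, ← mul_pow]; congr 1; ring
        rw [e]
        have hs : (2 * t - 1) ^ 2 ≤ (1 / (2 * r)) ^ 2 := by
          apply pow_le_pow_left₀ (by linarith [ht.1])
          have : 1 / (2 * r) = 2 * (1 / (4 * r)) := by field_simp; norm_num
          linarith [ht.2]
        have hs2 : (1 / (2 * r)) ^ 2 = 1 / (4 * ((n:ℝ) + 1)) := by
          rw [← hr2]; field_simp; norm_num
        have hn : (n:ℝ) * (1 / (4 * ((n:ℝ) + 1))) ≤ 1 / 4 := by
          rw [mul_one_div, div_le_iff₀ (by positivity)]; linarith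
        have hs3 : (1:ℝ) / (4 * ((n:ℝ) + 1)) ≤ 1 / 4 := by
          apply one_div_le_one_div_of_le (by norm_num)
          have : (0:ℝ) ≤ n := by positivity
          linarith
        have hb := one_add_mul_le_pow (a := -(2 * t - 1) ^ 2) (by linarith) n
        have hm : (n:ℝ) * (2 * t - 1) ^ 2 ≤ n * (1 / (4 * ((n:ℝ) + 1))) := by
          apply mul_le_mul_of_nonneg_left (by linarith) (by positivity)
        apply mul_le_mul_of_nonneg_left _ (by positivity)
        linarith
    _ ≤ ∫ t in (0:ℝ)..1, t ^ n * (1 - t) ^ n := by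
        apply intervalIntegral.integral_mono_interval (by norm_num) (by linarith) (by linarith)
        · refine (MeasureTheory.ae_restrict_iff' measurableSet_Ioc).2 (.of_forall fun t ht => ?_)
          have := ht.1
          have : 0 ≤ 1 - t := by linarith [ht.2]
          simp only [Pi.zero_apply]
          positivity
        · exact hc.intervalIntegrable _ _

lemma aux_upper (m : ℕ) :
    ∫ x in (0:ℝ)..1, |Real.log (2 * x)| * (x ^ (m + 1) * (1 - x) ^ (m + 1))
      ≤ 2 * (1 / 4) ^ (m + 1) / (m + 1) := by
  rw [← aux_int, intervalIntegral.integral_of_le zero_le_one,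
    intervalIntegral.integral_of_le zero_le_one]
  have hc : Continuous fun x : ℝ => |2 * x - 1| * (x * (1 - x)) ^ m := by fun_prop
  apply MeasureTheory.integral_mono_of_nonneg
  · refine (MeasureTheory.ae_restrict_iff' measurableSet_Ioc).2 (.of_forall fun t ht => ?_)
    have := ht.1
    have : 0 ≤ 1 - t := by linarith [ht.2]
    simp only [Pi.zero_apply]
    positivity
  · exact (hc.intervalIntegrable 0 1).1
  · refine (MeasureTheory.ae_restrict_iff' measurableSet_Ioc).2 (.of_forall fun t ht => ?_)
    have h0 := ht.1
    have h1 : 0 ≤ 1 - t := by linarith [ht.2]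
    have hl := aux_log_s4 ht.1 ht.2
    simp only
    calc |Real.log (2 * t)| * (t ^ (m + 1) * (1 - t) ^ (m + 1))
        = (|Real.log (2 * t)| * t) * (t * (1 - t)) ^ m * (1 - t) := by rw [mul_pow]; ring
      _ ≤ (|Real.log (2 * t)| * t) * (t * (1 - t)) ^ m * 1 := by
          apply mul_le_mul_of_nonneg_left (by linarith) (by positivity)
      _ ≤ |2 * t - 1| * (t * (1 - t)) ^ m := by
          rw [mul_one]
          apply mul_le_mul_of_nonneg_right hl (by positivity)

/-- There is a constant `C > 0` such that for every `k ≥ 1`, if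
`U_k ~ Beta(k, k)` then `E|log(2 U_k)| ≤ C k^{-1/2}`, i.e.
`∫₀¹ |log(2x)| · x^{k-1}(1-x)^{k-1} / B(k,k) dx ≤ C · k^{-1/2}`,
where `B(k,k) = ∫₀¹ x^{k-1}(1-x)^{k-1} dx`. In particular
`η(k) = E|log(2 U_k)| = O(k^{-1/2})` as `k → ∞`. -/
theorem beta_k_k_log_moment_bound :
    ∃ C : ℝ, 0 < C ∧ ∀ k : ℕ, 0 < k →
      (∫ x in (0:ℝ)..1, |Real.log (2 * x)| * (x ^ (k - 1) * (1 - x) ^ (k - 1)) /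
          (∫ t in (0:ℝ)..1, t ^ (k - 1) * (1 - t) ^ (k - 1))) ≤
        C * (k : ℝ) ^ (-(1 / 2 : ℝ)) := by
  set A : ℝ := ∫ x in (0:ℝ)..1, |Real.log (2 * x)| * (x ^ (1 - 1) * (1 - x) ^ (1 - 1)) /
          (∫ t in (0:ℝ)..1, t ^ (1 - 1) * (1 - t) ^ (1 - 1)) with hA
  refine ⟨32 + |A|, by positivity, fun k hk => ?_⟩
  rcases k with _ | _ | m
  · omega
  · have h : A ≤ 32 + |A| := by linarith [le_abs_self A]
    simpa [hA] using h
  · simp only [Nat.add_sub_cancel]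
    rw [intervalIntegral.integral_div]
    have hup := aux_upper m
    have hlo := aux_lower (m + 1)
    have hcast : ((m + 1 + 1 : ℕ) : ℝ) = ((m + 1 : ℕ) : ℝ) + 1 := by push_cast; ring
    rw [Real.rpow_neg (by positivity), ← Real.sqrt_eq_rpow, hcast]
    set r := √(((m + 1 : ℕ) : ℝ) + 1) with hr
    have hr2 : r ^ 2 = m + 2 := by
      rw [hr, Real.sq_sqrt (by positivity)]; push_cast; ring
    have hr0 : 0 < r := Real.sqrt_pos.2 (by positivity)
    calc _ ≤ (2 * (1 / 4) ^ (m + 1) / (m + 1)) / ((1 / 4 : ℝ) ^ (m + 1) / (8 * r)) := by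
          apply div_le_div₀ (by positivity) hup (by positivity) hlo
      _ = 16 * r / (m + 1) := by field_simp; norm_num
      _ ≤ 32 * r⁻¹ := by
          rw [← div_eq_mul_inv, div_le_div_iff₀ (by positivity) hr0]
          have : (0:ℝ) ≤ m := by positivity
          nlinarith
      _ ≤ (32 + |A|) * r⁻¹ := by
          apply mul_le_mul_of_nonneg_right _ (by positivity)
          linarith [abs_nonneg A]
end
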